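/- Define, for γ > 0 and ν, ν' ∈ ℝ: A(γ,ν,ν') = 4νγ³(3−4ν')(3−2ν), B(γ,ν) = 4γ³(2 − 8ν + 3γ² − 6νγ² + 8ν²), and C(γ,ν,ν') = (3γ⁵ + (1−4ν)γ³)·(1 + (3−4ν)(3−4ν')) + (4ν'−2)·{(3−4ν)·[(4ν−1)γ³ − 6γ⁵] + 15γ⁵ − 12νγ⁵ − 2γ³} − 4γ³(1−ν)(1−2ν')(3−4ν). Then for all ν, ν' ∈ [0, 1/2], every γ with √(2/3) ≤ γ ≤ 1, and all μ ≥ 0, μ' ≥ 0, one has A(γ,ν,ν')·μ² + B(γ,ν)·(μ')² + C(γ,ν,ν')·μμ' ≥ (32√2/(3√3))·(1−ν)(1−2ν)·(μ')². -/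

import Mathlib

/-- Coefficient of `μ²` in the quadratic form expansion of
`16r²(1−ν)πμ ∂Γ^R₃₃/∂x₃`. -/
def Acoeff (γ ν ν' : ℝ) : ℝ := 4 * ν * γ ^ 3 * (3 - 4 * ν') * (3 - 2 * ν)

/-- Coefficient of `(μ')²`. -/
def Bcoeff (γ ν : ℝ) : ℝ := 4 * γ ^ 3 * (2 - 8 * ν + 3 * γ ^ 2 - 6 * ν * γ ^ 2 + 8 * ν ^ 2)

/-- Coefficient of the mixed term `μμ'`. -/
def Ccoeff (γ ν ν' : ℝ) : ℝ :=
  (3 * γ ^ 5 + (1 - 4 * ν) * γ ^ 3) * (1 + (3 - 4 * ν) * (3 - 4 * ν'))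
    + (4 * ν' - 2) *
        ((3 - 4 * ν) * ((4 * ν - 1) * γ ^ 3 - 6 * γ ^ 5)
          + 15 * γ ^ 5 - 12 * ν * γ ^ 5 - 2 * γ ^ 3)
    - 4 * γ ^ 3 * (1 - ν) * (1 - 2 * ν') * (3 - 4 * ν)

/-!
Each coefficient is bounded separately. The threshold `γ = √(2/3)` is where `3γ² - 2` vanishes, and
rewriting `B` and `C` in terms of this quantity makes their signs visible: `B` exceeds
`16γ³(1-ν)(1-2ν)` by a nonnegative multiple of `3γ² - 2`, while `C` is affine in `ν'` and
nonnegative at `ν' = 0` and at `ν' = 3/4`, the point where `A` changes sign. The constant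
`32√2/(3√3)` is the value of `16γ³` at the threshold.
-/

section

variable {γ ν ν' μ μ' : ℝ}

theorem acoeff_nonneg (hγ : 0 ≤ γ) (hν₀ : 0 ≤ ν) (hν : ν ≤ 3 / 2) (hν' : ν' ≤ 3 / 4) :
    0 ≤ Acoeff γ ν ν' := by
  have h₁ : 0 ≤ 3 - 4 * ν' := by linarith
  have h₂ : 0 ≤ 3 - 2 * ν := by linarith
  unfold Acoeff
  positivity

theorem bcoeff_eq_add (γ ν : ℝ) :
    Bcoeff γ ν
      = 16 * γ ^ 3 * (1 - ν) * (1 - 2 * ν) + 4 * γ ^ 3 * (1 - 2 * ν) * (3 * γ ^ 2 - 2) := by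
  unfold Bcoeff
  ring

theorem le_bcoeff (hγ : 0 ≤ γ) (hγ2 : 0 ≤ 3 * γ ^ 2 - 2) (hν : ν ≤ 1 / 2) :
    16 * γ ^ 3 * (1 - ν) * (1 - 2 * ν) ≤ Bcoeff γ ν := by
  have h : 0 ≤ 1 - 2 * ν := by linarith
  rw [bcoeff_eq_add]
  exact le_add_of_nonneg_right (by positivity)

theorem ccoeff_zero_right (γ ν : ℝ) :
    Ccoeff γ ν 0
      = 4 * γ ^ 3 * ((3 * γ ^ 2 - 2) * (3 - 5 * ν) + 8 * (1 - ν) * (1 - 2 * ν)) := by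
  unfold Ccoeff
  ring

theorem ccoeff_three_quarters_right (γ ν : ℝ) :
    Ccoeff γ ν (3 / 4)
      = 2 * γ ^ 3 * (2 * ν * (3 * γ ^ 2 - 2) + (1 - ν) * (1 + 4 * ν)) := by
  unfold Ccoeff
  ring

theorem ccoeff_eq_affine_combination (γ ν ν' : ℝ) :
    Ccoeff γ ν ν'
      = (1 - 4 / 3 * ν') * Ccoeff γ ν 0 + 4 / 3 * ν' * Ccoeff γ ν (3 / 4) := by
  unfold Ccoeff
  ring

theorem ccoeff_zero_right_nonneg (hγ : 0 ≤ γ) (hγ2 : 0 ≤ 3 * γ ^ 2 - 2) (hν : ν ≤ 1 / 2) :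
    0 ≤ Ccoeff γ ν 0 := by
  have h₁ : 0 ≤ 3 - 5 * ν := by linarith
  have h₂ : 0 ≤ 1 - ν := by linarith
  have h₃ : 0 ≤ 1 - 2 * ν := by linarith
  rw [ccoeff_zero_right]
  positivity

theorem ccoeff_three_quarters_right_nonneg (hγ : 0 ≤ γ) (hγ2 : 0 ≤ 3 * γ ^ 2 - 2)
    (hν₀ : 0 ≤ ν) (hν : ν ≤ 1) : 0 ≤ Ccoeff γ ν (3 / 4) := by
  rw [ccoeff_three_quarters_right]
  positivity

theorem ccoeff_nonneg (hγ : 0 ≤ γ) (hγ2 : 0 ≤ 3 * γ ^ 2 - 2)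
    (hν : ν ∈ Set.Icc (0 : ℝ) (1 / 2)) (hν' : ν' ∈ Set.Icc (0 : ℝ) (3 / 4)) :
    0 ≤ Ccoeff γ ν ν' := by
  obtain ⟨hν₀, hν₁⟩ := hν
  obtain ⟨hν'₀, hν'₁⟩ := hν'
  have hweight : 0 ≤ 1 - 4 / 3 * ν' := by linarith
  have hleft := ccoeff_zero_right_nonneg hγ hγ2 hν₁
  have hright := ccoeff_three_quarters_right_nonneg hγ hγ2 hν₀ (by linarith)
  rw [ccoeff_eq_affine_combination]
  positivity

theorem quadratic_form_ge_sixteen_mul_cube (hγ : 0 ≤ γ) (hγ2 : 0 ≤ 3 * γ ^ 2 - 2)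
    (hν : ν ∈ Set.Icc (0 : ℝ) (1 / 2)) (hν' : ν' ∈ Set.Icc (0 : ℝ) (3 / 4))
    (hμμ' : 0 ≤ μ * μ') :
    Acoeff γ ν ν' * μ ^ 2 + Bcoeff γ ν * μ' ^ 2 + Ccoeff γ ν ν' * (μ * μ')
      ≥ 16 * γ ^ 3 * (1 - ν) * (1 - 2 * ν) * μ' ^ 2 := by
  have hA : 0 ≤ Acoeff γ ν ν' * μ ^ 2 :=
    mul_nonneg (acoeff_nonneg hγ hν.1 (by linarith [hν.2]) hν'.2) (sq_nonneg μ)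
  have hB : 16 * γ ^ 3 * (1 - ν) * (1 - 2 * ν) * μ' ^ 2 ≤ Bcoeff γ ν * μ' ^ 2 :=
    mul_le_mul_of_nonneg_right (le_bcoeff hγ hγ2 hν.2) (sq_nonneg μ')
  have hC : 0 ≤ Ccoeff γ ν ν' * (μ * μ') := mul_nonneg (ccoeff_nonneg hγ hγ2 hν hν') hμμ'
  linarith

theorem sixteen_mul_sqrt_two_thirds_cube :
    16 * √(2 / 3) ^ 3 = 32 * √2 / (3 * √3) := by
  rw [pow_succ, Real.sq_sqrt (by norm_num), Real.sqrt_div (by norm_num)]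
  ring

theorem quadratic_form_lower_bound_general (hν : ν ∈ Set.Icc (0 : ℝ) (1 / 2))
    (hν' : ν' ∈ Set.Icc (0 : ℝ) (3 / 4)) (hγ : √(2 / 3) ≤ γ) (hμμ' : 0 ≤ μ * μ') :
    Acoeff γ ν ν' * μ ^ 2 + Bcoeff γ ν * μ' ^ 2 + Ccoeff γ ν ν' * (μ * μ')
      ≥ (32 * √2 / (3 * √3)) * (1 - ν) * (1 - 2 * ν) * μ' ^ 2 := by
  have hγ₀ : 0 ≤ γ := (Real.sqrt_nonneg _).trans hγ
  have hγ2 : 0 ≤ 3 * γ ^ 2 - 2 := by linarith [(Real.sqrt_le_left hγ₀).1 hγ]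
  have h₁ : 0 ≤ 1 - ν := by linarith [hν.2]
  have h₂ : 0 ≤ 1 - 2 * ν := by linarith [hν.2]
  calc (32 * √2 / (3 * √3)) * (1 - ν) * (1 - 2 * ν) * μ' ^ 2
      = 16 * √(2 / 3) ^ 3 * (1 - ν) * (1 - 2 * ν) * μ' ^ 2 := by
        rw [sixteen_mul_sqrt_two_thirds_cube]
    _ ≤ 16 * γ ^ 3 * (1 - ν) * (1 - 2 * ν) * μ' ^ 2 := by gcongr
    _ ≤ _ := quadratic_form_ge_sixteen_mul_cube hγ₀ hγ2 hν hν' hμμ'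

end

/-- Lower bound on the quadratic form `Aμ² + B(μ')² + Cμμ'`: for `ν, ν' ∈ [0, 1/2]`,
`√(2/3) ≤ γ ≤ 1` and `μ, μ' ≥ 0`, it is at least `(32√2/(3√3))(1−ν)(1−2ν)(μ')²`. -/
theorem quadratic_form_lower_bound (γ ν ν' μ μ' : ℝ)
    (hν : ν ∈ Set.Icc (0 : ℝ) (1 / 2)) (hν' : ν' ∈ Set.Icc (0 : ℝ) (1 / 2))
    (hγ : Real.sqrt (2 / 3) ≤ γ) (hγ1 : γ ≤ 1)
    (hμ : 0 ≤ μ) (hμ' : 0 ≤ μ') :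
    Acoeff γ ν ν' * μ ^ 2 + Bcoeff γ ν * μ' ^ 2 + Ccoeff γ ν ν' * (μ * μ')
      ≥ (32 * Real.sqrt 2 / (3 * Real.sqrt 3)) * (1 - ν) * (1 - 2 * ν) * μ' ^ 2 :=
  quadratic_form_lower_bound_general hν (Set.Icc_subset_Icc_right (by norm_num) hν') hγ
    (mul_nonneg hμ hμ')
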